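/- Let p₋₂, p₋₁, p₋₁', p₀, p₀', q₀, q₀' be complex numbers with p₋₂ ≠ 0 and q₀' ≠ 0, and let a, a', b, b' : ℕ → ℂ satisfy a_{n+1} = p₋₂·n² + p₋₁·n + p₀ + O(n^{−1}), a'_n = p₋₂·n² + p₋₁'·n + p₀' + O(n^{−1}) (equal leading coefficients, the class D⁼₂₀), b_{n+1} = q₀ + O(n^{−1}), b'_n = q₀' + O(n^{−1}). Suppose X : ℕ → ℂ satisfies the tail recurrence (b'_n·b_{n+1} + a_{n+1})·X_n + b'_n·X_n·X_{n+1} − a'_n·X_{n+1} − a'_n·b_{n+1} = 0 for all n ≥ 1, and X_n = τ₋₂·n + τ₋₁·n^{1/2} + τ₀ + O(n^{−1/2}) for some complex τ₋₂, τ₋₁, τ₀. Then the beginning coefficient τ₋₂ satisfies the quadratic equation q₀'·τ₋₂² + (p₋₁ − p₋₁' − p₋₂)·τ₋₂ − p₋₂·q₀ = 0. -/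

import Mathlib

open Asymptotics Filter

/-- `n^s` as a complex number, for `n : ℕ` and a real exponent `s`. -/
noncomputable def rpowC (s : ℝ) (n : ℕ) : ℂ := (((n : ℝ) ^ s : ℝ) : ℂ)

open Topology

theorem tendsto_zero_of_isBigO_rpow_neg {u : ℕ → ℂ} {s : ℝ} (hs : 0 < s)
    (hu : u =O[atTop] fun n : ℕ => (n : ℝ) ^ (-s)) : Tendsto u atTop (𝓝 0) :=
  hu.trans_tendsto ((tendsto_rpow_neg_atTop hs).comp tendsto_natCast_atTop_atTop)

theorem tendsto_natCast_inv_zero : Tendsto (fun n : ℕ => (n : ℂ)⁻¹) atTop (𝓝 0) :=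
  tendsto_inv_atTop_nhds_zero_nat

theorem tendsto_sqrt_natCast_inv_zero :
    Tendsto (fun n : ℕ => (√(n : ℝ))⁻¹) atTop (𝓝 0) :=
  (Real.tendsto_sqrt_atTop.comp tendsto_natCast_atTop_atTop).inv_tendsto_atTop

theorem rpowC_half_eq_sqrt (n : ℕ) : rpowC (1 / 2) n = ((√(n : ℝ) : ℝ) : ℂ) := by
  rw [rpowC, Real.sqrt_eq_rpow]

theorem tendsto_rpowC_half_succ_sub :
    Tendsto (fun n : ℕ => rpowC (1 / 2) (n + 1) - rpowC (1 / 2) n) atTop (𝓝 0) := by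
  have hreal : Tendsto (fun n : ℕ => √((n : ℝ) + 1) - √(n : ℝ)) atTop (𝓝 0) := by
    refine squeeze_zero' (Eventually.of_forall fun n => ?_) ?_ tendsto_sqrt_natCast_inv_zero
    · exact sub_nonneg.2 (Real.sqrt_le_sqrt (by linarith))
    · filter_upwards [eventually_gt_atTop 0] with n hn
      have hpos : 0 < √(n : ℝ) := Real.sqrt_pos.2 (by exact_mod_cast hn)
      rw [sub_le_iff_le_add, Real.sqrt_le_iff]
      refine ⟨by positivity, ?_⟩
      have hexp : ((√(n : ℝ))⁻¹ + √(n : ℝ)) ^ 2 = ((√(n : ℝ))⁻¹) ^ 2 + 2 + √(n : ℝ) ^ 2 := by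
        field_simp
        ring
      rw [hexp, Real.sq_sqrt n.cast_nonneg]
      nlinarith [sq_nonneg ((√(n : ℝ))⁻¹)]
  have hcomplex := (Complex.continuous_ofReal.tendsto 0).comp hreal
  rw [Complex.ofReal_zero] at hcomplex
  refine hcomplex.congr fun n => ?_
  rw [rpowC_half_eq_sqrt, rpowC_half_eq_sqrt]
  simp

theorem tendsto_rpowC_half_div :
    Tendsto (fun n : ℕ => rpowC (1 / 2) n / n) atTop (𝓝 0) := by
  have hcomplex := (Complex.continuous_ofReal.tendsto 0).comp tendsto_sqrt_natCast_inv_zero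
  rw [Complex.ofReal_zero] at hcomplex
  refine hcomplex.congr fun n => ?_
  rw [rpowC_half_eq_sqrt, Function.comp_apply, ← Real.sqrt_div_self]
  push_cast
  rfl

/-- The first-order asymptotics of a sequence with a half-integer power expansion. -/
theorem tendsto_div_of_expansion {X : ℕ → ℂ} {τm2 τm1 τ0 : ℂ}
    (hX : Tendsto (fun n : ℕ => X n - (τm2 * n + τm1 * rpowC (1 / 2) n + τ0)) atTop (𝓝 0)) :
    Tendsto (fun n : ℕ => X n / n) atTop (𝓝 τm2) := by
  have hlim := (((hX.add_const τ0).mul tendsto_natCast_inv_zero).add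
    (tendsto_rpowC_half_div.const_mul τm1)).const_add τm2
  have hval : τm2 + ((0 + τ0) * 0 + τm1 * 0) = τm2 := by ring
  rw [hval] at hlim
  refine hlim.congr' ?_
  filter_upwards [eventually_ne_atTop 0] with n hn
  have hn' : (n : ℂ) ≠ 0 := Nat.cast_ne_zero.2 hn
  field_simp
  ring

/-- The increments of a sequence with a half-integer power expansion converge to the
coefficient of its linear term. -/
theorem tendsto_succ_sub_of_expansion {X : ℕ → ℂ} {τm2 τm1 τ0 : ℂ}
    (hX : Tendsto (fun n : ℕ => X n - (τm2 * n + τm1 * rpowC (1 / 2) n + τ0)) atTop (𝓝 0)) :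
    Tendsto (fun n : ℕ => X (n + 1) - X n) atTop (𝓝 τm2) := by
  have hlim := ((((tendsto_add_atTop_iff_nat 1).2 hX).sub hX).add
    (tendsto_rpowC_half_succ_sub.const_mul τm1)).const_add τm2
  have hval : τm2 + (0 - 0 + τm1 * 0) = τm2 := by ring
  rw [hval] at hlim
  refine hlim.congr fun n => ?_
  push_cast
  ring

/-- Class D⁼₂₀: the beginning coefficient `τ₋₂` satisfies the quadratic equation
`q₀' τ₋₂² + (p₋₁ − p₋₁' − p₋₂) τ₋₂ − p₋₂ q₀ = 0`. -/
theorem stmt4 (pm2 pm1 pm1' p₀ p₀' q₀ q₀' : ℂ)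
    (hpm2 : pm2 ≠ 0) (hq₀' : q₀' ≠ 0)
    (a a' b b' : ℕ → ℂ)
    (ha : (fun n : ℕ => a (n + 1) - (pm2 * n ^ 2 + pm1 * n + p₀))
      =O[atTop] fun n : ℕ => (n : ℝ) ^ (-(1 : ℝ)))
    (ha' : (fun n : ℕ => a' n - (pm2 * n ^ 2 + pm1' * n + p₀'))
      =O[atTop] fun n : ℕ => (n : ℝ) ^ (-(1 : ℝ)))
    (hb : (fun n : ℕ => b (n + 1) - q₀)
      =O[atTop] fun n : ℕ => (n : ℝ) ^ (-(1 : ℝ)))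
    (hb' : (fun n : ℕ => b' n - q₀')
      =O[atTop] fun n : ℕ => (n : ℝ) ^ (-(1 : ℝ)))
    (X : ℕ → ℂ)
    (hrec : ∀ n : ℕ, 1 ≤ n →
      (b' n * b (n + 1) + a (n + 1)) * X n + b' n * X n * X (n + 1)
        - a' n * X (n + 1) - a' n * b (n + 1) = 0)
    (τm2 τm1 τ0 : ℂ)
    (hX : (fun n : ℕ => X n - (τm2 * n + τm1 * rpowC (1 / 2) n + τ0))
      =O[atTop] fun n : ℕ => (n : ℝ) ^ (-(1 / 2 : ℝ))) :
    q₀' * τm2 ^ 2 + (pm1 - pm1' - pm2) * τm2 - pm2 * q₀ = 0 := by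
  have hX0 := tendsto_zero_of_isBigO_rpow_neg (by norm_num) hX
  have ha0 := tendsto_zero_of_isBigO_rpow_neg one_pos ha
  have ha0' := tendsto_zero_of_isBigO_rpow_neg one_pos ha'
  have hb0 : Tendsto (fun n => b (n + 1)) atTop (𝓝 q₀) :=
    tendsto_sub_nhds_zero_iff.1 (tendsto_zero_of_isBigO_rpow_neg one_pos hb)
  have hb0' : Tendsto b' atTop (𝓝 q₀') :=
    tendsto_sub_nhds_zero_iff.1 (tendsto_zero_of_isBigO_rpow_neg one_pos hb')
  have hinv := tendsto_natCast_inv_zero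
  have hXdiv := tendsto_div_of_expansion hX0
  have hXdiff := tendsto_succ_sub_of_expansion hX0
  have hadiff : Tendsto (fun n : ℕ => (a (n + 1) - a' n) / n) atTop (𝓝 (pm1 - pm1')) := by
    have hlim := (((ha0.sub ha0').add_const (p₀ - p₀')).mul hinv).const_add (pm1 - pm1')
    rw [mul_zero, add_zero] at hlim
    refine hlim.congr' ?_
    filter_upwards [eventually_ne_atTop 0] with n hn
    have hn' : (n : ℂ) ≠ 0 := Nat.cast_ne_zero.2 hn
    field_simp
    ring
  have hadiv : Tendsto (fun n : ℕ => a' n / (n : ℂ) ^ 2) atTop (𝓝 pm2) := by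
    have hlim := ((((ha0'.add_const p₀').mul hinv).add_const pm1').mul hinv).const_add pm2
    rw [mul_zero, add_zero] at hlim
    refine hlim.congr' ?_
    filter_upwards [eventually_ne_atTop 0] with n hn
    have hn' : (n : ℂ) ≠ 0 := Nat.cast_ne_zero.2 hn
    field_simp
    ring
  have hlim := ((((((hb0'.mul hb0).mul hXdiv).mul hinv).add (hadiff.mul hXdiv)).add
    ((hb0'.mul hXdiv).mul (hXdiv.add (hXdiff.mul hinv)))).sub (hadiv.mul hXdiff)).sub
    (hadiv.mul hb0)
  have hzero := tendsto_nhds_unique_of_eventuallyEq hlim tendsto_const_nhds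
    (g := fun _ => (0 : ℂ)) ?_
  · linear_combination hzero
  · filter_upwards [eventually_ge_atTop 1] with n hn
    have hn' : (n : ℂ) ≠ 0 := Nat.cast_ne_zero.2 (by lia)
    field_simp
    linear_combination hrec n hn
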